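/- arXiv:1011.4362 — 7 statements merged into one kernel-verified Lean document; each statement's English description precedes it below -/
import Mathlib

section
/- Assume the m×m matrix ΦᵀΞLΦ is invertible, and let w_TD := (ΦᵀΞLΦ)⁻¹ΦᵀΞ r. Then v̂_TD := Φ w_TD is the unique element v̂ of the column space of Φ satisfying the projected Bellman equation v̂ = Π(T v̂). -/
open Matrix

theorem stmt_8 (N m : ℕ) (hm : 0 < m) (hmN : m ≤ N)
    (P : Matrix (Fin N) (Fin N) ℝ)
    (hP0 : ∀ i j, 0 ≤ P i j) (hP1 : ∀ i, ∑ j, P i j = 1)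
    (γ : ℝ) (hγ0 : 0 < γ) (hγ1 : γ < 1)
    (r : Fin N → ℝ)
    (T : (Fin N → ℝ) → Fin N → ℝ) (hT : ∀ v, T v = r + γ • P.mulVec v)
    (L : Matrix (Fin N) (Fin N) ℝ) (hL : L = 1 - γ • P)
    (ξ : Fin N → ℝ) (hξ : ∀ i, 0 < ξ i)
    (Φ : Matrix (Fin N) (Fin m) ℝ) (hΦ : Function.Injective Φ.mulVec)
    (Pr : Matrix (Fin N) (Fin N) ℝ)
    (hPr : Pr = Φ * (Φᵀ * Matrix.diagonal ξ * Φ)⁻¹ * Φᵀ * Matrix.diagonal ξ)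
    (hinv : IsUnit (Φᵀ * Matrix.diagonal ξ * L * Φ))
    (wTD : Fin m → ℝ)
    (hwTD : wTD = ((Φᵀ * Matrix.diagonal ξ * L * Φ)⁻¹ * Φᵀ * Matrix.diagonal ξ).mulVec r) :
    Φ.mulVec wTD = Pr.mulVec (T (Φ.mulVec wTD)) ∧
    (∀ v : Fin N → ℝ, (∃ w, v = Φ.mulVec w) → v = Pr.mulVec (T v) → v = Φ.mulVec wTD) := by
  have hG : IsUnit (Φᵀ * Matrix.diagonal ξ * Φ) := by
    have h1 : (Matrix.diagonal ξ).PosDef := Matrix.PosDef.diagonal hξ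
    have h2 := h1.conjTranspose_mul_mul_same hΦ
    rw [Matrix.conjTranspose_eq_transpose_of_trivial] at h2
    exact h2.isUnit
  have hGd := (Matrix.isUnit_iff_isUnit_det _).1 hG
  have hAd := (Matrix.isUnit_iff_isUnit_det _).1 hinv
  have hA : ∀ w, (Φᵀ * Matrix.diagonal ξ * L * Φ).mulVec w
      = (Φᵀ * Matrix.diagonal ξ * Φ).mulVec w
        - (Φᵀ * Matrix.diagonal ξ).mulVec (γ • P.mulVec (Φ.mulVec w)) := by
    intro w
    rw [hL]
    simp only [← Matrix.mulVec_mulVec, Matrix.sub_mulVec, Matrix.one_mulVec, Matrix.mulVec_sub,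
      Matrix.smul_mulVec]
  have hPv : ∀ x, Pr.mulVec x = Φ.mulVec ((Φᵀ * Matrix.diagonal ξ * Φ)⁻¹.mulVec
      ((Φᵀ * Matrix.diagonal ξ).mulVec x)) := by
    intro x
    rw [hPr]
    simp only [Matrix.mulVec_mulVec, Matrix.mul_assoc]
  have key : ∀ w, Φ.mulVec w = Pr.mulVec (T (Φ.mulVec w)) ↔
      (Φᵀ * Matrix.diagonal ξ * L * Φ).mulVec w = (Φᵀ * Matrix.diagonal ξ).mulVec r := by
    intro w
    rw [hPv, hΦ.eq_iff, hA, hT, Matrix.mulVec_add, sub_eq_iff_eq_add]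
    constructor
    · intro h
      have h' := congrArg (Φᵀ * Matrix.diagonal ξ * Φ).mulVec h
      rwa [Matrix.mulVec_mulVec _ _ (Φᵀ * Matrix.diagonal ξ * Φ)⁻¹, Matrix.mul_nonsing_inv _ hGd,
        Matrix.one_mulVec] at h'
    · intro h
      rw [← h, Matrix.mulVec_mulVec, Matrix.nonsing_inv_mul _ hGd, Matrix.one_mulVec]
  have hw : wTD = (Φᵀ * Matrix.diagonal ξ * L * Φ)⁻¹.mulVec
      ((Φᵀ * Matrix.diagonal ξ).mulVec r) := by
    rw [hwTD, Matrix.mulVec_mulVec, Matrix.mul_assoc _ Φᵀ]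
  constructor
  · rw [key, hw, Matrix.mulVec_mulVec, Matrix.mul_nonsing_inv _ hAd, Matrix.one_mulVec]
  · rintro v ⟨w, rfl⟩ h
    rw [key] at h
    rw [hw, ← h, Matrix.mulVec_mulVec w, Matrix.nonsing_inv_mul _ hAd, Matrix.one_mulVec]
end

section
/- Let X be an N×m real matrix such that both XᵀΦ and XᵀLΦ are invertible, and let Π_X := Φ(XᵀΦ)⁻¹Xᵀ be the oblique projection onto the column space of Φ along directions X. Then v̂_X := Φ(XᵀLΦ)⁻¹Xᵀ r is the unique element v̂ of the column space of Φ satisfying the projected Bellman equation v̂ = Π_X(T v̂); moreover v̂_X = Π_{LᵀX} v*, i.e., v̂_X = Φ(XᵀLΦ)⁻¹ XᵀL v*, so v̂_X is the projection of the true value v* onto the column space of Φ orthogonally to the span of LᵀX. -/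
open Matrix

theorem stmt_9 (N m : ℕ) (hm : 0 < m) (hmN : m ≤ N)
    (P : Matrix (Fin N) (Fin N) ℝ)
    (hP0 : ∀ i j, 0 ≤ P i j) (hP1 : ∀ i, ∑ j, P i j = 1)
    (γ : ℝ) (hγ0 : 0 < γ) (hγ1 : γ < 1)
    (r : Fin N → ℝ)
    (T : (Fin N → ℝ) → Fin N → ℝ) (hT : ∀ v, T v = r + γ • P.mulVec v)
    (L : Matrix (Fin N) (Fin N) ℝ) (hL : L = 1 - γ • P)
    (vstar : Fin N → ℝ) (hv : vstar = L⁻¹.mulVec r)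
    (Φ : Matrix (Fin N) (Fin m) ℝ) (hΦ : Function.Injective Φ.mulVec)
    (X : Matrix (Fin N) (Fin m) ℝ)
    (hX1 : IsUnit (Xᵀ * Φ)) (hX2 : IsUnit (Xᵀ * L * Φ))
    (PiX : Matrix (Fin N) (Fin N) ℝ) (hPiX : PiX = Φ * (Xᵀ * Φ)⁻¹ * Xᵀ)
    (vX : Fin N → ℝ) (hvX : vX = (Φ * (Xᵀ * L * Φ)⁻¹ * Xᵀ).mulVec r) :
    (∃ w, vX = Φ.mulVec w) ∧
    vX = PiX.mulVec (T vX) ∧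
    (∀ v : Fin N → ℝ, (∃ w, v = Φ.mulVec w) → v = PiX.mulVec (T v) → v = vX) ∧
    vX = (Φ * (Xᵀ * L * Φ)⁻¹ * Xᵀ * L).mulVec vstar := by
  have hLdet : L.det ≠ 0 := by
    apply det_ne_zero_of_sum_row_lt_diag
    intro i
    have h1 : ∑ j ∈ Finset.univ.erase i, ‖L i j‖ = γ * ∑ j ∈ Finset.univ.erase i, P i j := by
      rw [Finset.mul_sum]
      refine Finset.sum_congr rfl fun j hj => ?_
      have hne : i ≠ j := (Finset.ne_of_mem_erase hj).symm
      simp [hL, Matrix.one_apply_ne hne, abs_of_nonneg (hP0 i j), abs_of_pos hγ0]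
    have h2 : P i i + ∑ j ∈ Finset.univ.erase i, P i j = 1 := by
      rw [Finset.add_sum_erase _ _ (Finset.mem_univ i)]
      exact hP1 i
    have h3 : L i i = 1 - γ * P i i := by simp [hL]
    have h4 : (1 : ℝ) - γ * P i i ≤ ‖L i i‖ := by
      rw [h3]; exact le_abs_self _
    rw [h1]
    have h5 : ∑ j ∈ Finset.univ.erase i, P i j = 1 - P i i := by linarith
    rw [h5]
    nlinarith
  have hA := (Matrix.isUnit_iff_isUnit_det _).1 hX1
  have hB := (Matrix.isUnit_iff_isUnit_det _).1 hX2
  have hw0 : vX = Φ.mulVec ((Xᵀ * L * Φ)⁻¹.mulVec (Xᵀ.mulVec r)) := by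
    rw [hvX]; simp only [Matrix.mulVec_mulVec, Matrix.mul_assoc]
  have hTL : ∀ v, T v = r + v - L.mulVec v := by
    intro v
    rw [hT, hL, Matrix.sub_mulVec, Matrix.one_mulVec, Matrix.smul_mulVec]
    abel
  have key : ∀ w, PiX.mulVec (T (Φ.mulVec w)) = Φ.mulVec (w + (Xᵀ * Φ)⁻¹.mulVec
      (Xᵀ.mulVec r - (Xᵀ * L * Φ).mulVec w)) := by
    intro w
    have e : w = (Xᵀ * Φ)⁻¹.mulVec ((Xᵀ * Φ).mulVec w) := by
      rw [Matrix.mulVec_mulVec, Matrix.nonsing_inv_mul _ hA, Matrix.one_mulVec]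
    conv_rhs => enter [2, 1]; rw [e]
    rw [← Matrix.mulVec_add, hTL, hPiX, ← Matrix.mulVec_mulVec, ← Matrix.mulVec_mulVec]
    congr 2
    rw [Matrix.mulVec_sub, Matrix.mulVec_add]
    simp only [Matrix.mulVec_mulVec, Matrix.mul_assoc]
    abel
  refine ⟨⟨_, hw0⟩, ?_, ?_, ?_⟩
  · rw [hw0, key, Matrix.mulVec_mulVec _ (Xᵀ * L * Φ), Matrix.mul_nonsing_inv _ hB]
    simp
  · rintro v ⟨w, rfl⟩ h
    rw [key] at h
    have h1 := hΦ h
    have h2 : (Xᵀ * Φ)⁻¹.mulVec (Xᵀ.mulVec r - (Xᵀ * L * Φ).mulVec w) = 0 :=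
      left_eq_add.1 h1
    have h3 := congrArg (Xᵀ * Φ).mulVec h2
    rw [Matrix.mulVec_mulVec, Matrix.mul_nonsing_inv _ hA, Matrix.one_mulVec,
      Matrix.mulVec_zero, sub_eq_zero] at h3
    rw [hw0, h3, Matrix.mulVec_mulVec w, Matrix.nonsing_inv_mul _ hB, Matrix.one_mulVec]
  · rw [hv, ← Matrix.mulVec_mulVec _ _ L, Matrix.mulVec_mulVec _ L,
      Matrix.mul_nonsing_inv _ (isUnit_iff_ne_zero.2 hLdet), Matrix.one_mulVec, hvX]
end

section
/- Let X_BR := ΞLΦ and assume X_BRᵀΦ (= ΦᵀLᵀΞΦ) is invertible, so that the oblique projection Π_{X_BR} := Φ(X_BRᵀΦ)⁻¹X_BRᵀ is well defined. Then the Bellman-residual minimizer v̂_BR := Φ w_BR with w_BR = ((LΦ)ᵀΞLΦ)⁻¹(LΦ)ᵀΞ r satisfies the projected Bellman equation v̂_BR = Π_{X_BR}(T v̂_BR). -/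
open Matrix

theorem stmt_10 (N m : ℕ) (hm : 0 < m) (hmN : m ≤ N)
    (P : Matrix (Fin N) (Fin N) ℝ)
    (hP0 : ∀ i j, 0 ≤ P i j) (hP1 : ∀ i, ∑ j, P i j = 1)
    (γ : ℝ) (hγ0 : 0 < γ) (hγ1 : γ < 1)
    (r : Fin N → ℝ)
    (T : (Fin N → ℝ) → Fin N → ℝ) (hT : ∀ v, T v = r + γ • P.mulVec v)
    (L : Matrix (Fin N) (Fin N) ℝ) (hL : L = 1 - γ • P)
    (ξ : Fin N → ℝ) (hξ : ∀ i, 0 < ξ i)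
    (Φ : Matrix (Fin N) (Fin m) ℝ) (hΦ : Function.Injective Φ.mulVec)
    (XBR : Matrix (Fin N) (Fin m) ℝ) (hXBR : XBR = Matrix.diagonal ξ * L * Φ)
    (hinv : IsUnit (XBRᵀ * Φ))
    (wBR : Fin m → ℝ)
    (hwBR : wBR = (((L * Φ)ᵀ * Matrix.diagonal ξ * (L * Φ))⁻¹ * (L * Φ)ᵀ *
      Matrix.diagonal ξ).mulVec r)
    (vBR : Fin N → ℝ) (hvBR : vBR = Φ.mulVec wBR) :
    vBR = (Φ * (XBRᵀ * Φ)⁻¹ * XBRᵀ).mulVec (T vBR) := by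
  have hX : XBRᵀ = (L * Φ)ᵀ * Matrix.diagonal ξ := by
    rw [hXBR, Matrix.mul_assoc, Matrix.transpose_mul, Matrix.diagonal_transpose]
  have hinv2 : IsUnit (Φᵀ * Matrix.diagonal ξ * (L * Φ)) := by
    have h := (Matrix.isUnit_transpose _).2 hinv
    rw [Matrix.transpose_mul, Matrix.transpose_transpose, hXBR] at h
    simpa only [Matrix.mul_assoc] using h
  have hinj : Function.Injective (L * Φ).mulVec := by
    intro a b hab
    apply Matrix.mulVec_injective_of_isUnit hinv2
    simp only [← Matrix.mulVec_mulVec] at hab ⊢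
    rw [hab]
  have hpd : ((L * Φ)ᵀ * Matrix.diagonal ξ * (L * Φ)).PosDef := by
    have h := (Matrix.PosDef.diagonal hξ).conjTranspose_mul_mul_same hinj
    rwa [Matrix.conjTranspose_eq_transpose_of_trivial] at h
  have hG := (Matrix.isUnit_iff_isUnit_det _).1 hpd.isUnit
  have hnormal : (XBRᵀ * (L * Φ)).mulVec wBR = XBRᵀ.mulVec r := by
    rw [hX, hwBR, Matrix.mulVec_mulVec, Matrix.mul_assoc _ (L * Φ)ᵀ,
      Matrix.mul_nonsing_inv_cancel_left _ _ hG]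
  have hTv : T vBR = r + vBR - L.mulVec vBR := by
    rw [hT, hL, Matrix.sub_mulVec, Matrix.one_mulVec, Matrix.smul_mulVec]
    abel
  have hkey : XBRᵀ.mulVec (T vBR) = (XBRᵀ * Φ).mulVec wBR := by
    rw [hTv, Matrix.mulVec_sub, Matrix.mulVec_add, ← hnormal, hvBR]
    simp only [Matrix.mulVec_mulVec]
    abel
  rw [← Matrix.mulVec_mulVec, hkey, Matrix.mulVec_mulVec, Matrix.mul_assoc,
    Matrix.nonsing_inv_mul _ ((Matrix.isUnit_iff_isUnit_det _).1 hinv), Matrix.mul_one, hvBR]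
end

section
/- Let X be an N×m real matrix such that XᵀΦ and XᵀLΦ are invertible, and let v̂_X := Φ(XᵀLΦ)⁻¹Xᵀ r. Then the approximation error of v̂_X factors as v* − v̂_X = (I − Π_{LᵀX})(I − Π) v*, where Π_{LᵀX} = Φ(XᵀLΦ)⁻¹XᵀL and Π is the ξ-orthogonal projection onto the column space of Φ. -/
open Matrix

theorem stmt_11 (N m : ℕ) (hm : 0 < m) (hmN : m ≤ N)
    (P : Matrix (Fin N) (Fin N) ℝ)
    (hP0 : ∀ i j, 0 ≤ P i j) (hP1 : ∀ i, ∑ j, P i j = 1)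
    (γ : ℝ) (hγ0 : 0 < γ) (hγ1 : γ < 1)
    (r : Fin N → ℝ)
    (L : Matrix (Fin N) (Fin N) ℝ) (hL : L = 1 - γ • P)
    (vstar : Fin N → ℝ) (hv : vstar = L⁻¹.mulVec r)
    (ξ : Fin N → ℝ) (hξ : ∀ i, 0 < ξ i)
    (Φ : Matrix (Fin N) (Fin m) ℝ) (hΦ : Function.Injective Φ.mulVec)
    (Pr : Matrix (Fin N) (Fin N) ℝ)
    (hPr : Pr = Φ * (Φᵀ * Matrix.diagonal ξ * Φ)⁻¹ * Φᵀ * Matrix.diagonal ξ)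
    (X : Matrix (Fin N) (Fin m) ℝ)
    (hX1 : IsUnit (Xᵀ * Φ)) (hX2 : IsUnit (Xᵀ * L * Φ))
    (PiLX : Matrix (Fin N) (Fin N) ℝ) (hPiLX : PiLX = Φ * (Xᵀ * L * Φ)⁻¹ * Xᵀ * L)
    (vX : Fin N → ℝ) (hvX : vX = (Φ * (Xᵀ * L * Φ)⁻¹ * Xᵀ).mulVec r) :
    vstar - vX = ((1 - PiLX) * (1 - Pr)).mulVec vstar := by
  have hdet : L.det ≠ 0 := by
    apply det_ne_zero_of_sum_row_lt_diag
    intro k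
    have h1 : ∑ j ∈ Finset.univ.erase k, ‖L k j‖ = ∑ j ∈ Finset.univ.erase k, γ * P k j := by
      apply Finset.sum_congr rfl
      intro j hj
      have hkj : k ≠ j := fun h => (Finset.ne_of_mem_erase hj) h.symm
      rw [hL, Matrix.sub_apply, Matrix.one_apply_ne hkj, Matrix.smul_apply, smul_eq_mul,
        zero_sub, norm_neg, Real.norm_of_nonneg (mul_nonneg hγ0.le (hP0 k j))]
    have h2 : P k k + ∑ j ∈ Finset.univ.erase k, P k j = 1 := by
      rw [Finset.add_sum_erase _ _ (Finset.mem_univ k), hP1]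
    rw [h1, ← Finset.mul_sum]
    have h3 : L k k = 1 - γ * P k k := by
      rw [hL, Matrix.sub_apply, Matrix.one_apply_eq, Matrix.smul_apply, smul_eq_mul]
    rw [h3]
    refine lt_of_lt_of_le ?_ (le_abs_self _)
    have h4 : ∑ j ∈ Finset.univ.erase k, P k j = 1 - P k k := by linarith
    rw [h4]
    nlinarith
  have hr : r = L.mulVec vstar := by
    rw [hv, Matrix.mulVec_mulVec, Matrix.mul_nonsing_inv _ (isUnit_iff_ne_zero.mpr hdet),
      Matrix.one_mulVec]
  have hvX' : vX = PiLX.mulVec vstar := by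
    rw [hvX, hr, Matrix.mulVec_mulVec, hPiLX]
  have hPiΦ : PiLX * Φ = Φ := by
    have h := Matrix.nonsing_inv_mul _ ((Matrix.isUnit_iff_isUnit_det _).mp hX2)
    calc PiLX * Φ = Φ * ((Xᵀ * L * Φ)⁻¹ * (Xᵀ * L * Φ)) := by
          rw [hPiLX]; simp only [Matrix.mul_assoc]
      _ = Φ := by rw [h, Matrix.mul_one]
  have hPiPr : PiLX * Pr = Pr := by
    rw [hPr]
    simp only [← Matrix.mul_assoc]
    rw [hPiΦ]
  have hfac : (1 - PiLX) * (1 - Pr) = 1 - PiLX := by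
    rw [mul_sub, mul_one, sub_mul, one_mul, hPiPr, sub_self, sub_zero]
  rw [hfac, Matrix.sub_mulVec, Matrix.one_mulVec, hvX']
end

section
/- Let X be an N×m real matrix such that XᵀΦ and XᵀLΦ are invertible, and let v̂_X := Φ(XᵀLΦ)⁻¹Xᵀ r. If K ≥ 0 is any constant such that ‖Π_{LᵀX} x‖_ξ ≤ K·‖x‖_ξ for all x ∈ ℝ^N (with Π_{LᵀX} = Φ(XᵀLΦ)⁻¹XᵀL), then ‖v* − v̂_X‖_ξ ≤ K·‖v* − Π v*‖_ξ; that is, the approximation error of the oblique-projection method is at most the ξ-operator norm of Π_{LᵀX} times the best-approximation error ‖v* − v_best‖_ξ. -/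
open Matrix

/-- The ξ-weighted quadratic norm on ℝ^N: ‖x‖_ξ = √(Σ_i ξ_i x_i²). -/
noncomputable def wnorm {N : ℕ} (ξ : Fin N → ℝ) (x : Fin N → ℝ) : ℝ :=
  Real.sqrt (∑ i, ξ i * (x i) ^ 2)

lemma L_isUnit {N : ℕ} (P : Matrix (Fin N) (Fin N) ℝ)
    (hP0 : ∀ i j, 0 ≤ P i j) (hP1 : ∀ i, ∑ j, P i j = 1)
    (γ : ℝ) (hγ0 : 0 < γ) (hγ1 : γ < 1) : IsUnit (1 - γ • P).det := by
  rw [isUnit_iff_ne_zero]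
  apply det_ne_zero_of_sum_row_lt_diag
  intro k
  have h1 : ∑ j ∈ Finset.univ.erase k, ‖(1 - γ • P) k j‖
      = ∑ j ∈ Finset.univ.erase k, γ * P k j := by
    apply Finset.sum_congr rfl
    intro j hj
    have hkj : k ≠ j := (Finset.ne_of_mem_erase hj).symm
    simp [Matrix.one_apply_ne hkj, abs_of_pos hγ0, abs_of_nonneg (hP0 k j)]
  have h2 := Finset.add_sum_erase Finset.univ (fun j => P k j) (Finset.mem_univ k)
  rw [hP1 k] at h2
  rw [h1, ← Finset.mul_sum]
  have h3 : (1 - γ • P) k k = 1 - γ * P k k := by simp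
  rw [h3, Real.norm_eq_abs]
  refine lt_of_lt_of_le ?_ (le_abs_self _)
  have h4 : ∑ j ∈ Finset.univ.erase k, P k j = 1 - P k k := by
    linarith
  rw [h4]
  linarith

lemma gram_isUnit {N m : ℕ} (ξ : Fin N → ℝ) (hξ : ∀ i, 0 < ξ i)
    (Φ : Matrix (Fin N) (Fin m) ℝ) (hΦ : Function.Injective Φ.mulVec) :
    IsUnit (Φᵀ * Matrix.diagonal ξ * Φ).det := by
  have h := (Matrix.PosDef.diagonal hξ).conjTranspose_mul_mul_same hΦ
  rw [Matrix.conjTranspose_eq_transpose_of_trivial] at h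
  exact isUnit_iff_ne_zero.mpr h.det_pos.ne'

lemma wnorm_sq {N : ℕ} (ξ : Fin N → ℝ) (hξ : ∀ i, 0 < ξ i) (x : Fin N → ℝ) :
    wnorm ξ x ^ 2 = ∑ i, ξ i * (x i) ^ 2 :=
  Real.sq_sqrt (Finset.sum_nonneg fun i _ => mul_nonneg (hξ i).le (sq_nonneg _))

lemma wnorm_nonneg {N : ℕ} (ξ : Fin N → ℝ) (x : Fin N → ℝ) : 0 ≤ wnorm ξ x :=
  Real.sqrt_nonneg _

lemma wnorm_comb {N : ℕ} (ξ : Fin N → ℝ) (hξ : ∀ i, 0 < ξ i) (e y : Fin N → ℝ)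
    (h : ∑ i, ξ i * (e i * y i) = 0) (s t : ℝ) :
    wnorm ξ (s • e + t • y) ^ 2 = s ^ 2 * wnorm ξ e ^ 2 + t ^ 2 * wnorm ξ y ^ 2 := by
  simp only [wnorm_sq ξ hξ]
  have : s ^ 2 * ∑ i, ξ i * e i ^ 2 + t ^ 2 * ∑ i, ξ i * y i ^ 2
    = s ^ 2 * ∑ i, ξ i * e i ^ 2 + t ^ 2 * ∑ i, ξ i * y i ^ 2
      + 2 * s * t * ∑ i, ξ i * (e i * y i) := by rw [h]; ring
  rw [this]
  simp only [Finset.mul_sum, ← Finset.sum_add_distrib]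
  apply Finset.sum_congr rfl
  intro i _
  simp
  ring

theorem stmt_12 (N m : ℕ) (hm : 0 < m) (hmN : m ≤ N)
    (P : Matrix (Fin N) (Fin N) ℝ)
    (hP0 : ∀ i j, 0 ≤ P i j) (hP1 : ∀ i, ∑ j, P i j = 1)
    (γ : ℝ) (hγ0 : 0 < γ) (hγ1 : γ < 1)
    (r : Fin N → ℝ)
    (L : Matrix (Fin N) (Fin N) ℝ) (hL : L = 1 - γ • P)
    (vstar : Fin N → ℝ) (hv : vstar = L⁻¹.mulVec r)
    (ξ : Fin N → ℝ) (hξ : ∀ i, 0 < ξ i)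
    (Φ : Matrix (Fin N) (Fin m) ℝ) (hΦ : Function.Injective Φ.mulVec)
    (Pr : Matrix (Fin N) (Fin N) ℝ)
    (hPr : Pr = Φ * (Φᵀ * Matrix.diagonal ξ * Φ)⁻¹ * Φᵀ * Matrix.diagonal ξ)
    (X : Matrix (Fin N) (Fin m) ℝ)
    (hX1 : IsUnit (Xᵀ * Φ)) (hX2 : IsUnit (Xᵀ * L * Φ))
    (PiLX : Matrix (Fin N) (Fin N) ℝ) (hPiLX : PiLX = Φ * (Xᵀ * L * Φ)⁻¹ * Xᵀ * L)
    (vX : Fin N → ℝ) (hvX : vX = (Φ * (Xᵀ * L * Φ)⁻¹ * Xᵀ).mulVec r)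
    (K : ℝ) (hK : 0 ≤ K)
    (hKbound : ∀ x : Fin N → ℝ, wnorm ξ (PiLX.mulVec x) ≤ K * wnorm ξ x) :
    wnorm ξ (vstar - vX) ≤ K * wnorm ξ (vstar - Pr.mulVec vstar) := by
  have hLu : IsUnit L.det := hL ▸ L_isUnit P hP0 hP1 γ hγ0 hγ1
  have hGu := gram_isUnit ξ hξ Φ hΦ
  have hMu : IsUnit (Xᵀ * L * Φ).det := (Matrix.isUnit_iff_isUnit_det _).mp hX2
  have hQΦ : PiLX * Φ = Φ := by
    have : PiLX * Φ = Φ * ((Xᵀ * L * Φ)⁻¹ * (Xᵀ * L * Φ)) := by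
      rw [hPiLX]; simp only [Matrix.mul_assoc]
    rw [this, Matrix.nonsing_inv_mul _ hMu, Matrix.mul_one]
  have hQc : ∀ c, PiLX *ᵥ (Φ *ᵥ c) = Φ *ᵥ c := fun c => by rw [Matrix.mulVec_mulVec, hQΦ]
  have hQv : PiLX *ᵥ vstar = vX := by
    rw [hv, hPiLX, hvX, Matrix.mulVec_mulVec, Matrix.mul_assoc _ L, Matrix.mul_nonsing_inv _ hLu,
      Matrix.mul_one]
  obtain ⟨d, hd⟩ : ∃ d, Pr *ᵥ vstar = Φ *ᵥ d :=
    ⟨((Φᵀ * Matrix.diagonal ξ * Φ)⁻¹ * Φᵀ * Matrix.diagonal ξ) *ᵥ vstar, by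
      rw [hPr, Matrix.mulVec_mulVec]; simp only [Matrix.mul_assoc]⟩
  have horth : (Φᵀ * Matrix.diagonal ξ) *ᵥ (vstar - Pr *ᵥ vstar) = 0 := by
    have : Φᵀ * Matrix.diagonal ξ * Pr = Φᵀ * Matrix.diagonal ξ := by
      have h : Φᵀ * Matrix.diagonal ξ * Pr = (Φᵀ * Matrix.diagonal ξ * Φ) *
          (Φᵀ * Matrix.diagonal ξ * Φ)⁻¹ * (Φᵀ * Matrix.diagonal ξ) := by
        rw [hPr]; simp only [Matrix.mul_assoc]
      rw [h, Matrix.mul_nonsing_inv _ hGu, Matrix.one_mul]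
    rw [Matrix.mulVec_sub, Matrix.mulVec_mulVec, this, sub_self]
  obtain ⟨e, he⟩ : ∃ e, e = vstar - Pr *ᵥ vstar := ⟨_, rfl⟩
  obtain ⟨y, hy⟩ : ∃ y, y = PiLX *ᵥ e := ⟨_, rfl⟩
  obtain ⟨c, hc⟩ : ∃ c, y = Φ *ᵥ c := ⟨((Xᵀ * L * Φ)⁻¹ * Xᵀ * L) *ᵥ e, by
      rw [hy, hPiLX, Matrix.mulVec_mulVec]; simp only [Matrix.mul_assoc]⟩
  have hQy : PiLX *ᵥ y = y := by rw [hc, hQc]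
  have hdiff : vstar - vX = (1 : ℝ) • e + (-1 : ℝ) • y := by
    rw [hy, he, Matrix.mulVec_sub, hQv, hd, hQc]
    ext i; simp
  rw [← he] at horth ⊢
  have hey : ∑ i, ξ i * (e i * y i) = 0 := by
    have h : c ⬝ᵥ ((Φᵀ * Matrix.diagonal ξ) *ᵥ e) = 0 := by rw [horth]; simp
    rw [← Matrix.mulVec_mulVec, Matrix.dotProduct_mulVec, Matrix.vecMul_transpose, ← hc] at h
    rw [← h]
    simp only [dotProduct, Matrix.mulVec_diagonal]
    exact Finset.sum_congr rfl fun i _ => by ring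
  have hcomb := wnorm_comb ξ hξ e y hey
  have hK2 : ∀ x, wnorm ξ (PiLX *ᵥ x) ^ 2 ≤ K ^ 2 * wnorm ξ x ^ 2 := fun x => by
    rw [← mul_pow]
    exact pow_le_pow_left₀ (wnorm_nonneg _ _) (hKbound x) 2
  have hK1 : 1 ≤ K ^ 2 := by
    have hne : Φ *ᵥ (fun _ => 1) ≠ 0 := by
      intro h
      have h' : (fun _ : Fin m => (1 : ℝ)) = 0 := hΦ (by simpa using h)
      have := congrFun h' ⟨0, hm⟩
      simp at this
    have h := hK2 (Φ *ᵥ (fun _ => 1))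
    rw [hQc] at h
    have hpos : 0 < wnorm ξ (Φ *ᵥ (fun _ => 1)) ^ 2 := by
      rw [wnorm_sq ξ hξ]
      obtain ⟨i, hi⟩ := Function.ne_iff.mp hne
      refine Finset.sum_pos' (fun i _ => mul_nonneg (hξ i).le (sq_nonneg _)) ⟨i, Finset.mem_univ _, ?_⟩
      exact mul_pos (hξ i) (sq_pos_of_ne_zero hi)
    nlinarith
  rw [hdiff]
  refine (sq_le_sq₀ (wnorm_nonneg _ _) (mul_nonneg hK (wnorm_nonneg _ _))).mp ?_
  rw [mul_pow, hcomb]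
  have ha : 0 ≤ wnorm ξ e ^ 2 := sq_nonneg _
  have hb : 0 ≤ wnorm ξ y ^ 2 := sq_nonneg _
  have hye := hK2 e
  rw [← hy] at hye
  have htest := hK2 ((wnorm ξ y ^ 2) • e + (wnorm ξ e ^ 2) • y)
  have hQx : PiLX *ᵥ ((wnorm ξ y ^ 2) • e + (wnorm ξ e ^ 2) • y)
      = (0 : ℝ) • e + (wnorm ξ y ^ 2 + wnorm ξ e ^ 2) • y := by
    rw [Matrix.mulVec_add, Matrix.mulVec_smul, Matrix.mulVec_smul, hQy, ← hy, add_smul]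
    simp
  rw [hQx, hcomb, hcomb] at htest
  generalize wnorm ξ e ^ 2 = a at *
  generalize wnorm ξ y ^ 2 = b at *
  rcases hb.eq_or_lt with hb0 | hb0
  · rw [← hb0]
    nlinarith
  · have hpos : 0 < b * (a + b) := by positivity
    have : (b * (a + b)) * (a + b) ≤ (b * (a + b)) * (K ^ 2 * a) := by nlinarith
    have := le_of_mul_le_mul_left this hpos
    linarith
end

section
/- Let E be a continuous linear projection (E ∘ E = E) on a real inner product space H, with E ≠ 0 and E ≠ id. Then the operator norm of E equals the operator norm of id − E: ‖E‖ = ‖id − E‖. -/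
theorem proj_aux (H : Type*) [NormedAddCommGroup H] [InnerProductSpace ℝ H]
    (P : H →L[ℝ] H) (hP : ∀ x, P (P x) = P x) (h0 : P ≠ 0) :
    ‖ContinuousLinearMap.id ℝ H - P‖ ≤ ‖P‖ := by
  have hone : 1 ≤ ‖P‖ := by
    obtain ⟨w, hw⟩ : ∃ w, P w ≠ 0 := by
      by_contra! h
      exact h0 (ContinuousLinearMap.ext h)
    have h := P.le_opNorm (P w)
    rw [hP] at h
    have hpos : 0 < ‖P w‖ := norm_pos_iff.mpr hw
    nlinarith
  refine ContinuousLinearMap.opNorm_le_bound _ (norm_nonneg _) fun x => ?_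
  obtain ⟨u, hu⟩ : ∃ u, u = P x := ⟨_, rfl⟩
  obtain ⟨v, hv⟩ : ∃ v, v = x - P x := ⟨_, rfl⟩
  have hx : x = u + v := by rw [hu, hv]; abel
  have hPu : P u = u := by rw [hu, hP]
  have hPv : P v = 0 := by rw [hv, map_sub, hP, sub_self]
  have hQ : (ContinuousLinearMap.id ℝ H - P) x = v := by simp [hv]
  rw [hQ, hx]
  by_cases hu0 : u = 0
  · rw [hu0, zero_add]
    nlinarith [norm_nonneg v]
  by_cases hv0 : v = 0
  · rw [hv0, norm_zero]; positivity
  have hup : 0 < ‖u‖ := norm_pos_iff.mpr hu0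
  have hvp : 0 < ‖v‖ := norm_pos_iff.mpr hv0
  have h := P.le_opNorm ((‖v‖ / ‖u‖) • u + (‖u‖ / ‖v‖) • v)
  have e1 : ‖P ((‖v‖ / ‖u‖) • u + (‖u‖ / ‖v‖) • v)‖ = ‖v‖ := by
    rw [map_add, map_smul, map_smul, hPu, hPv, smul_zero, add_zero, norm_smul, norm_div,
      norm_norm, norm_norm]
    field_simp
  have e2 : ‖(‖v‖ / ‖u‖) • u + (‖u‖ / ‖v‖) • v‖ = ‖u + v‖ := by
    rw [← sq_eq_sq₀ (norm_nonneg _) (norm_nonneg _), norm_add_sq_real, norm_add_sq_real,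
      norm_smul, norm_smul, inner_smul_left, inner_smul_right, norm_div, norm_div,
      norm_norm, norm_norm]
    simp only [conj_trivial]
    field_simp
    ring
  rwa [e1, e2] at h

theorem stmt_16 (H : Type*) [NormedAddCommGroup H] [InnerProductSpace ℝ H]
    (E : H →L[ℝ] H) (hE : E.comp E = E)
    (h0 : E ≠ 0) (h1 : E ≠ ContinuousLinearMap.id ℝ H) :
    ‖E‖ = ‖ContinuousLinearMap.id ℝ H - E‖ := by
  have hE' : ∀ x, E (E x) = E x := fun x => DFunLike.congr_fun hE x
  apply le_antisymm
  · have h := proj_aux H (ContinuousLinearMap.id ℝ H - E) (fun x => by simp [hE'])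
      (fun h => h1 (sub_eq_zero.mp h).symm)
    rwa [sub_sub_cancel] at h
  · exact proj_aux H E hE' h0
end

section
/- Let Φ and Y be N×m real matrices such that YᵀΦ is invertible. Then ΦᵀYYᵀΦ is invertible and the oblique projection along Y coincides with the YYᵀ-orthogonal projection onto the column space of Φ: Φ(YᵀΦ)⁻¹Yᵀ = Φ(ΦᵀYYᵀΦ)⁻¹ΦᵀYYᵀ. (Applied with Y = LᵀΞΦ, this shows the TD solution is the orthogonal projection of v* induced by the seminorm given by Q_TD = LᵀΞΦΦᵀΞL.) -/
open Matrix

theorem stmt_17 (N m : ℕ) (hm : 0 < m) (hmN : m ≤ N)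
    (Φ Y : Matrix (Fin N) (Fin m) ℝ)
    (hY : IsUnit (Yᵀ * Φ)) :
    IsUnit (Φᵀ * Y * Yᵀ * Φ) ∧
    Φ * (Yᵀ * Φ)⁻¹ * Yᵀ = Φ * (Φᵀ * Y * Yᵀ * Φ)⁻¹ * Φᵀ * Y * Yᵀ := by
  have hT : IsUnit (Φᵀ * Y) := by
    have h := (Matrix.isUnit_transpose (A := Yᵀ * Φ)).2 hY
    rwa [Matrix.transpose_mul, Matrix.transpose_transpose] at h
  have e : Φᵀ * Y * Yᵀ * Φ = (Φᵀ * Y) * (Yᵀ * Φ) := by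
    simp only [Matrix.mul_assoc]
  refine ⟨e ▸ hT.mul hY, ?_⟩
  have hd : IsUnit (Φᵀ * Y).det := (Matrix.isUnit_iff_isUnit_det _).1 hT
  have k : (Φᵀ * Y)⁻¹ * (Φᵀ * Y) = 1 := Matrix.nonsing_inv_mul _ hd
  calc Φ * (Yᵀ * Φ)⁻¹ * Yᵀ
      = Φ * (Yᵀ * Φ)⁻¹ * ((Φᵀ * Y)⁻¹ * (Φᵀ * Y)) * Yᵀ := by rw [k, Matrix.mul_one]
    _ = Φ * (Φᵀ * Y * Yᵀ * Φ)⁻¹ * Φᵀ * Y * Yᵀ := by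
      rw [e, Matrix.mul_inv_rev]
      simp only [Matrix.mul_assoc]
end
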